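/- arXiv:2510.22342 — 4 statements merged into one kernel-verified Lean document; each statement's English description precedes it below -/
import Mathlib

section
/- Let n ≥ 1, let f : ℝⁿ → ℝ, and let xᴸ, xᵁ ∈ ℝⁿ be bounds with xᵁᵢ − xᴸᵢ = δ for every coordinate i, where δ > 0. Let α ≥ 0 and λ_min ∈ ℝ satisfy α ≤ |λ_min|/2, and define the αBB underestimator L(x) = f(x) + α Σᵢ (xᴸᵢ − xᵢ)(xᵁᵢ − xᵢ). Suppose f is Lipschitz continuous with constant L_f on the box [xᴸ, xᵁ], i.e. |f(x) − f(y)| ≤ L_f‖x − y‖₂ for all x, y in the box. Then for any two points x_t, x_k in the box with ‖x_t − x_k‖₂ ≤ (√n/2)·δ, one has |L(x_t) − f(x_k)| ≤ (L_f/2)·√n·δ + (|λ_min|/8)·n·δ². -/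
/-!
The triangle inequality through `f xt` splits the error into the separation `|L xt - f xt|` and the
Lipschitz increment `|f xt - f xk|`. The separation is largest at the midpoint of the box: the two
factors of each product `(x i - l i) * (u i - x i)` have sum `u i - l i`, so by AM-GM the sum of the
products is at most `‖u - l‖ ^ 2 / 4`. Both terms are thus governed by the diagonal `‖u - l‖`,
which is `√n * δ` for a box of width `δ`.
-/

/-- The box `[l, u]` in Euclidean space, on which the αBB underestimator is built. It is described
coordinatewise, so it is empty as soon as `u i < l i` for some `i`. -/
def coordBox {ι : Type*} (l u : EuclideanSpace ℝ ι) : Set (EuclideanSpace ℝ ι) :=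
  {x | ∀ i, l i ≤ x i ∧ x i ≤ u i}

/-- The αBB underestimator of `f` on the box `[l, u]` with uniform parameter `α`. The formula is
used for every real `α` and on the whole space, although it is sure to underestimate `f` only on the
box and for `0 ≤ α`. -/
def abbUnderestimator {ι : Type*} [Fintype ι] (α : ℝ) (l u : EuclideanSpace ℝ ι)
    (f : EuclideanSpace ℝ ι → ℝ) (x : EuclideanSpace ℝ ι) : ℝ :=
  f x + α * ∑ i, (l i - x i) * (u i - x i)

theorem abs_sub_mul_sub_le_sq_div_four {K : Type*} [Field K] [LinearOrder K] [IsStrictOrderedRing K]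
    {l u x : K} (hl : l ≤ x) (hu : x ≤ u) : |(l - x) * (u - x)| ≤ (u - l) ^ 2 / 4 := by
  have amgm : 4 * (x - l) * (u - x) ≤ (x - l + (u - x)) ^ 2 := four_mul_le_sq_add _ _
  rw [abs_mul, abs_of_nonpos (sub_nonpos.2 hl), abs_of_nonneg (sub_nonneg.2 hu)]
  linarith

theorem dist_map_le_mul_of_dist_le_mul {X Y : Type*} [PseudoMetricSpace X] [PseudoMetricSpace Y]
    {f : X → Y} {s : Set X} {C t : ℝ} (hf : ∀ x ∈ s, ∀ y ∈ s, dist (f x) (f y) ≤ C * dist x y)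
    {x y p q : X} (hx : x ∈ s) (hy : y ∈ s) (hp : p ∈ s) (hq : q ∈ s)
    (h : dist x y ≤ t * dist p q) : dist (f x) (f y) ≤ C * (t * dist p q) := by
  -- The pair `p, q` controls the sign of `C`: either both sides vanish or `0 ≤ C`.
  rcases (dist_nonneg (x := p) (y := q)).eq_or_lt with hpq | hpq
  · have hxy : dist x y = 0 := le_antisymm (by simpa [← hpq] using h) dist_nonneg
    simpa [← hpq, hxy] using hf x hx y hy
  · have hC : 0 ≤ C := nonneg_of_mul_nonneg_left (dist_nonneg.trans (hf p hp q hq)) hpq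
    exact (hf x hx y hy).trans (mul_le_mul_of_nonneg_left h hC)

section Box

variable {ι : Type*} {l u x : EuclideanSpace ℝ ι}

theorem left_mem_coordBox (hx : x ∈ coordBox l u) : l ∈ coordBox l u :=
  fun i => ⟨le_rfl, (hx i).1.trans (hx i).2⟩

theorem right_mem_coordBox (hx : x ∈ coordBox l u) : u ∈ coordBox l u :=
  fun i => ⟨(hx i).1.trans (hx i).2, le_rfl⟩

variable [Fintype ι]

theorem abs_sum_sub_mul_sub_le_norm_sq_div_four (hx : x ∈ coordBox l u) :
    |∑ i, (l i - x i) * (u i - x i)| ≤ ‖u - l‖ ^ 2 / 4 :=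
  calc |∑ i, (l i - x i) * (u i - x i)|
      ≤ ∑ i, |(l i - x i) * (u i - x i)| := Finset.abs_sum_le_sum_abs _ _
    _ ≤ ∑ i, (u i - l i) ^ 2 / 4 :=
        Finset.sum_le_sum fun i _ => abs_sub_mul_sub_le_sq_div_four (hx i).1 (hx i).2
    _ = ‖u - l‖ ^ 2 / 4 := by
        simp only [EuclideanSpace.real_norm_sq_eq, PiLp.sub_apply, Finset.sum_div]

theorem abs_abbUnderestimator_sub_le (α : ℝ) (f : EuclideanSpace ℝ ι → ℝ)
    (hx : x ∈ coordBox l u) :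
    |abbUnderestimator α l u f x - f x| ≤ |α| * (‖u - l‖ ^ 2 / 4) := by
  rw [abbUnderestimator, add_sub_cancel_left, abs_mul]
  exact mul_le_mul_of_nonneg_left (abs_sum_sub_mul_sub_le_norm_sq_div_four hx) (abs_nonneg α)

end Box

theorem norm_eq_sqrt_card_mul_norm {𝕜 ι : Type*} [RCLike 𝕜] [Fintype ι] {v : EuclideanSpace 𝕜 ι}
    {c : 𝕜} (hv : ∀ i, v i = c) : ‖v‖ = √(Fintype.card ι) * ‖c‖ := by
  simp [EuclideanSpace.norm_eq, hv]

theorem abb_function_value_bound_general {ι : Type*} [Fintype ι] {f : EuclideanSpace ℝ ι → ℝ}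
    {l u : EuclideanSpace ℝ ι} {α lammin Lf : ℝ} (hα : |α| ≤ |lammin| / 2)
    (hLip : ∀ x ∈ coordBox l u, ∀ y ∈ coordBox l u, |f x - f y| ≤ Lf * ‖x - y‖)
    {xt xk : EuclideanSpace ℝ ι} (hxt : xt ∈ coordBox l u) (hxk : xk ∈ coordBox l u)
    (hdist : ‖xt - xk‖ ≤ 1 / 2 * ‖u - l‖) :
    |abbUnderestimator α l u f xt - f xk| ≤
      Lf / 2 * ‖u - l‖ + |lammin| / 8 * ‖u - l‖ ^ 2 := by
  have separation : |abbUnderestimator α l u f xt - f xt| ≤ |lammin| / 2 * (‖u - l‖ ^ 2 / 4) :=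
    (abs_abbUnderestimator_sub_le α f hxt).trans (by gcongr)
  have increment : |f xt - f xk| ≤ Lf * (1 / 2 * ‖u - l‖) := by
    simp only [← Real.dist_eq, ← dist_eq_norm] at hLip hdist ⊢
    exact dist_map_le_mul_of_dist_le_mul hLip hxt hxk (right_mem_coordBox hxt)
      (left_mem_coordBox hxt) hdist
  calc |abbUnderestimator α l u f xt - f xk|
      ≤ |abbUnderestimator α l u f xt - f xt| + |f xt - f xk| := abs_sub_le _ _ _
    _ ≤ |lammin| / 2 * (‖u - l‖ ^ 2 / 4) + Lf * (1 / 2 * ‖u - l‖) :=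
        add_le_add separation increment
    _ = Lf / 2 * ‖u - l‖ + |lammin| / 8 * ‖u - l‖ ^ 2 := by ring

/-- **Function value bound for the αBB underestimator (Theorem 1, part 1).**
If every side of the box `[xL, xU]` has width `δ > 0`, `0 ≤ α ≤ |λmin|/2`,
`f` is `Lf`-Lipschitz on the box, and `xt, xk` lie in the box with
`‖xt - xk‖ ≤ (√n/2)·δ`, then the αBB underestimator
`L(x) = f(x) + α ∑ i (xLᵢ - xᵢ)(xUᵢ - xᵢ)` satisfies
`|L(xt) - f(xk)| ≤ (Lf/2)√n δ + (|λmin|/8) n δ²`. -/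
theorem abb_function_value_bound (n : ℕ) (hn : 1 ≤ n)
    (f : EuclideanSpace ℝ (Fin n) → ℝ)
    (xL xU : EuclideanSpace ℝ (Fin n)) (δ : ℝ) (hδ : 0 < δ)
    (hwidth : ∀ i, xU i - xL i = δ)
    (α lammin : ℝ) (hα0 : 0 ≤ α) (hαle : α ≤ |lammin| / 2)
    (Lf : ℝ)
    (hLip : ∀ x y : EuclideanSpace ℝ (Fin n),
      (∀ i, xL i ≤ x i ∧ x i ≤ xU i) → (∀ i, xL i ≤ y i ∧ y i ≤ xU i) →
      |f x - f y| ≤ Lf * ‖x - y‖)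
    (L : EuclideanSpace ℝ (Fin n) → ℝ)
    (hL : L = fun x => f x + α * ∑ i, (xL i - x i) * (xU i - x i))
    (xt xk : EuclideanSpace ℝ (Fin n))
    (hxt : ∀ i, xL i ≤ xt i ∧ xt i ≤ xU i)
    (hxk : ∀ i, xL i ≤ xk i ∧ xk i ≤ xU i)
    (hdist : ‖xt - xk‖ ≤ (Real.sqrt n / 2) * δ) :
    |L xt - f xk| ≤ Lf / 2 * Real.sqrt n * δ + |lammin| / 8 * n * δ ^ 2 := by
  have hdiag : ‖xU - xL‖ = √n * δ := by
    simpa [abs_of_pos hδ] using norm_eq_sqrt_card_mul_norm (v := xU - xL) hwidth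
  have bound := abb_function_value_bound_general ((abs_of_nonneg hα0).trans_le hαle)
    (fun x hx y hy => hLip x y hx hy) hxt hxk (hdist.trans_eq (by rw [hdiag]; ring))
  rw [hdiag, mul_pow, Real.sq_sqrt n.cast_nonneg, ← mul_assoc, ← mul_assoc] at bound
  rwa [hL]
end

section
/- Let n ≥ 1, let f : ℝⁿ → ℝ be twice continuously differentiable, let xᴸ, xᵁ ∈ ℝⁿ with xᴸᵢ ≤ xᵁᵢ for all i, and let α ≥ 0 satisfy α ≥ −(1/2)·λ_min(∇²f(x)) for every x in the box [xᴸ, xᵁ], where λ_min(∇²f(x)) denotes the smallest eigenvalue of the Hessian matrix of f at x. Then the αBB underestimator L(x) = f(x) + α Σᵢ₌₁ⁿ (xᴸᵢ − xᵢ)(xᵁᵢ − xᵢ) is convex on the box [xᴸ, xᵁ]. -/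
/-!
The function `x ↦ ⟪a - x, b - x⟫` has second derivative `2⟪·, ·⟫` everywhere, so adding `α` times it
to `f` adds `2α` to every eigenvalue of the Hessian. The eigenvalue bound on `∇²f` therefore says
that the second derivative of the underestimator is nonnegative on the diagonal, which makes its
restriction to every segment of the box convex.
-/

/-- The Hessian matrix of `f : ℝⁿ → ℝ` at `x`, with entries the second partial
derivatives, expressed via the second iterated Fréchet derivative. -/
noncomputable def hessianMatrix {n : ℕ} (f : EuclideanSpace ℝ (Fin n) → ℝ)
    (x : EuclideanSpace ℝ (Fin n)) : Matrix (Fin n) (Fin n) ℝ :=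
  Matrix.of fun i j =>
    iteratedFDeriv ℝ 2 f x ![EuclideanSpace.single i 1, EuclideanSpace.single j 1]

open AffineMap Set
open scoped Matrix MatrixOrder RealInnerProductSpace

theorem convexOn_of_forall_comp_lineMap {𝕜 E β : Type*} [Ring 𝕜] [PartialOrder 𝕜] [ZeroLEOneClass 𝕜]
    [AddCommGroup E] [Module 𝕜 E] [AddCommMonoid β] [PartialOrder β] [SMul 𝕜 β]
    {s : Set E} {f : E → β} (hs : Convex 𝕜 s)
    (hf : ∀ x ∈ s, ∀ y ∈ s, ConvexOn 𝕜 (Icc (0 : 𝕜) 1) (f ∘ lineMap x y)) :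
    ConvexOn 𝕜 s f := by
  refine ⟨hs, fun x hx y hy a b ha hb hab ↦ ?_⟩
  have hline : lineMap x y b = a • x + b • y := by
    rw [lineMap_apply_module, ← eq_sub_of_add_eq hab]
  simpa [hline] using
    (hf x hx y hy).2 (left_mem_Icc.2 zero_le_one) (right_mem_Icc.2 zero_le_one) ha hb hab

theorem convexOn_of_hasFDerivWithinAt2_nonneg {E : Type*} [NormedAddCommGroup E]
    [NormedSpace ℝ E] {s : Set E} {f : E → ℝ} {f' : E → E →L[ℝ] ℝ} {f'' : E → E →L[ℝ] E →L[ℝ] ℝ}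
    (hs : Convex ℝ s) (hf : ∀ x ∈ s, HasFDerivWithinAt f (f' x) s x)
    (hf' : ∀ x ∈ s, HasFDerivWithinAt f' (f'' x) s x) (hf'' : ∀ x ∈ s, ∀ v, 0 ≤ f'' x v v) :
    ConvexOn ℝ s f := by
  refine convexOn_of_forall_comp_lineMap hs fun x hx y hy ↦ ?_
  have hmaps : MapsTo (lineMap x y) (Icc (0 : ℝ) 1) s := hs.mapsTo_lineMap hx hy
  have hderiv : ∀ t ∈ Icc (0 : ℝ) 1, HasDerivWithinAt (f ∘ lineMap x y)
      (f' (lineMap x y t) (y - x)) (Icc 0 1) t := fun t ht ↦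
    (hf _ (hmaps ht)).comp_hasDerivWithinAt t hasDerivWithinAt_lineMap hmaps
  have hderiv2 : ∀ t ∈ Icc (0 : ℝ) 1, HasDerivWithinAt (fun t ↦ f' (lineMap x y t) (y - x))
      (f'' (lineMap x y t) (y - x) (y - x)) (Icc 0 1) t := fun t ht ↦ by
    simpa using ((hf' _ (hmaps ht)).comp_hasDerivWithinAt t hasDerivWithinAt_lineMap
      hmaps).clm_apply (hasDerivWithinAt_const t _ (y - x))
  exact convexOn_of_hasDerivWithinAt2_nonneg (convex_Icc 0 1)
    (fun t ht ↦ (hderiv t ht).continuousWithinAt)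
    (fun t ht ↦ (hderiv t (interior_subset ht)).mono interior_subset)
    (fun t ht ↦ (hderiv2 t (interior_subset ht)).mono interior_subset)
    (fun t ht ↦ hf'' _ (hmaps (interior_subset ht)) _)

section InnerProductSpace

variable {E : Type*} [NormedAddCommGroup E] [InnerProductSpace ℝ E]

theorem hasFDerivAt_inner_sub_sub (a b x : E) :
    HasFDerivAt (fun x ↦ ⟪a - x, b - x⟫) (innerSL ℝ ((2 : ℝ) • x - (a + b))) x := by
  refine (((hasFDerivAt_id x).const_sub a).inner ℝ ((hasFDerivAt_id x).const_sub b)).congr_fderiv ?_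
  ext v
  change ⟪a - x, -v⟫ + ⟪-v, b - x⟫ = ⟪(2 : ℝ) • x - (a + b), v⟫
  simp only [inner_neg_left, inner_neg_right, inner_sub_right, inner_add_right,
    real_inner_smul_right, real_inner_comm v]
  ring

theorem hasFDerivAt_innerSL_two_smul_sub (c x : E) :
    HasFDerivAt (fun x ↦ innerSL ℝ ((2 : ℝ) • x - c))
      ((2 : ℝ) • (innerSL ℝ : E →L[ℝ] E →L[ℝ] ℝ)) x :=
  ((innerSL ℝ : E →L[ℝ] E →L[ℝ] ℝ).hasFDerivAt.comp x
    (((hasFDerivAt_id x).const_smul (2 : ℝ)).sub_const c)).congr_fderiv (by ext; simp)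

theorem convexOn_add_mul_inner_sub_sub {s : Set E} {f : E → ℝ} {f' : E → E →L[ℝ] ℝ}
    {f'' : E → E →L[ℝ] E →L[ℝ] ℝ} {α : ℝ} (hs : Convex ℝ s)
    (hf : ∀ x ∈ s, HasFDerivWithinAt f (f' x) s x)
    (hf' : ∀ x ∈ s, HasFDerivWithinAt f' (f'' x) s x)
    (hα : ∀ x ∈ s, ∀ v, -(2 * α) * ‖v‖ ^ 2 ≤ f'' x v v) (a b : E) :
    ConvexOn ℝ s fun x ↦ f x + α * ⟪a - x, b - x⟫ := by
  refine convexOn_of_hasFDerivWithinAt2_nonneg hs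
    (fun x hx ↦ (hf x hx).add ((hasFDerivAt_inner_sub_sub a b x).const_mul α).hasFDerivWithinAt)
    (fun x hx ↦ (hf' x hx).add
      ((hasFDerivAt_innerSL_two_smul_sub (a + b) x).const_smul α).hasFDerivWithinAt)
    fun x hx v ↦ ?_
  change 0 ≤ f'' x v v + α * (2 * ⟪v, v⟫)
  rw [real_inner_self_eq_norm_sq]
  linarith [hα x hx v]

end InnerProductSpace

theorem mul_dotProduct_self_le_of_le_spectrum {ι : Type*} [Fintype ι] [DecidableEq ι]
    {A : Matrix ι ι ℝ} (hA : A.IsHermitian) {c : ℝ} (hc : ∀ μ ∈ spectrum ℝ A, c ≤ μ)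
    (v : ι → ℝ) : c * (v ⬝ᵥ v) ≤ v ⬝ᵥ A *ᵥ v := by
  have hle : algebraMap ℝ (Matrix ι ι ℝ) c ≤ A := (algebraMap_le_iff_le_spectrum hA).2 hc
  simpa [Matrix.sub_mulVec, Algebra.algebraMap_eq_smul_one, Matrix.smul_mulVec] using
    (Matrix.le_iff.1 hle).dotProduct_mulVec_nonneg v

section Hessian

variable {n : ℕ} {f : EuclideanSpace ℝ (Fin n) → ℝ} {x : EuclideanSpace ℝ (Fin n)}

theorem isHermitian_hessianMatrix (hf : IsSymmSndFDerivAt ℝ f x) :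
    (hessianMatrix f x).IsHermitian := by
  ext i j
  simpa [hessianMatrix, iteratedFDeriv_two_apply] using hf _ _

theorem dotProduct_hessianMatrix_mulVec (f : EuclideanSpace ℝ (Fin n) → ℝ)
    (x v w : EuclideanSpace ℝ (Fin n)) :
    v.ofLp ⬝ᵥ hessianMatrix f x *ᵥ w.ofLp = fderiv ℝ (fderiv ℝ f) x v w := by
  let b := (EuclideanSpace.basisFun (Fin n) ℝ).toBasis
  have hmatrix : hessianMatrix f x =
      LinearMap.BilinForm.toMatrix b (fderiv ℝ (fderiv ℝ f) x).toBilinForm := by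
    ext i j
    simp [hessianMatrix, iteratedFDeriv_two_apply, LinearMap.BilinForm.toMatrix_apply, b]
  rw [hmatrix]
  exact (LinearMap.BilinForm.apply_eq_dotProduct_toMatrix_mulVec b _ v w).symm

theorem le_fderiv_fderiv_of_le_spectrum_hessianMatrix (hf : IsSymmSndFDerivAt ℝ f x) {c : ℝ}
    (hc : ∀ μ ∈ spectrum ℝ (hessianMatrix f x), c ≤ μ) (v : EuclideanSpace ℝ (Fin n)) :
    c * ‖v‖ ^ 2 ≤ fderiv ℝ (fderiv ℝ f) x v v := by
  rw [← dotProduct_hessianMatrix_mulVec, EuclideanSpace.real_norm_sq_eq]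
  simpa only [dotProduct, sq] using
    mul_dotProduct_self_le_of_le_spectrum (isHermitian_hessianMatrix hf) hc v

end Hessian

theorem convex_setOf_forall_le_and_le {ι : Type*} (a b : EuclideanSpace ℝ ι) :
    Convex ℝ {x : EuclideanSpace ℝ ι | ∀ i, a i ≤ x i ∧ x i ≤ b i} :=
  fun _ hx _ hy _ _ hs ht hst i ↦ convex_Icc (a i) (b i) (hx i) (hy i) hs ht hst

theorem abb_convex_general {n : ℕ} {s : Set (EuclideanSpace ℝ (Fin n))} (hs : Convex ℝ s)
    {f : EuclideanSpace ℝ (Fin n) → ℝ} (hf : ∀ x ∈ s, ContDiffAt ℝ 2 f x)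
    (xL xU : EuclideanSpace ℝ (Fin n)) {α : ℝ}
    (hα : ∀ x ∈ s, ∀ μ ∈ spectrum ℝ (hessianMatrix f x), α ≥ -(1 / 2) * μ) :
    ConvexOn ℝ s (fun x ↦ f x + α * ∑ i, (xL i - x i) * (xU i - x i)) := by
  have hspec : ∀ x ∈ s, ∀ μ ∈ spectrum ℝ (hessianMatrix f x), -(2 * α) ≤ μ :=
    fun x hx μ hμ ↦ by linarith [hα x hx μ hμ]
  have hderiv : ∀ x ∈ s, HasFDerivWithinAt f (fderiv ℝ f x) s x := fun x hx ↦
    ((hf x hx).differentiableAt two_ne_zero).hasFDerivAt.hasFDerivWithinAt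
  have hderiv2 : ∀ x ∈ s, HasFDerivWithinAt (fderiv ℝ f) (fderiv ℝ (fderiv ℝ f) x) s x := fun x hx ↦
    (((hf x hx).fderiv_right (m := 1) (by norm_num)).differentiableAt
      one_ne_zero).hasFDerivAt.hasFDerivWithinAt
  have hquad : ∀ x ∈ s, ∀ v, -(2 * α) * ‖v‖ ^ 2 ≤ fderiv ℝ (fderiv ℝ f) x v v := fun x hx ↦
    le_fderiv_fderiv_of_le_spectrum_hessianMatrix ((hf x hx).isSymmSndFDerivAt (by simp))
      (hspec x hx)
  simpa [PiLp.inner_apply, mul_comm] using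
    convexOn_add_mul_inner_sub_sub hs hderiv hderiv2 hquad xL xU

/-- **Convexity of the αBB underestimator (Maranas–Floudas condition, Eq. (10)).**
Let `f` be twice continuously differentiable and `α ≥ 0` satisfy
`α ≥ -(1/2)·λ_min(∇²f(x))` for every `x` in the box `[xL, xU]` (equivalently,
`α ≥ -(1/2)·μ` for every eigenvalue `μ` of `∇²f(x)` at every `x` in the box).
Then the αBB underestimator `L(x) = f(x) + α ∑ i (xLᵢ - xᵢ)(xUᵢ - xᵢ)` is
convex on the box. -/
theorem abb_convex (n : ℕ) (hn : 1 ≤ n)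
    (f : EuclideanSpace ℝ (Fin n) → ℝ) (hf : ContDiff ℝ 2 f)
    (xL xU : EuclideanSpace ℝ (Fin n)) (hbox : ∀ i, xL i ≤ xU i)
    (α : ℝ) (hα0 : 0 ≤ α)
    (hαeig : ∀ x : EuclideanSpace ℝ (Fin n), (∀ i, xL i ≤ x i ∧ x i ≤ xU i) →
      ∀ μ ∈ spectrum ℝ (hessianMatrix f x), α ≥ -(1 / 2) * μ) :
    ConvexOn ℝ {x : EuclideanSpace ℝ (Fin n) | ∀ i, xL i ≤ x i ∧ x i ≤ xU i}
      (fun x => f x + α * ∑ i, (xL i - x i) * (xU i - x i)) :=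
  abb_convex_general (convex_setOf_forall_le_and_le xL xU) (fun _ _ ↦ hf.contDiffAt) xL xU hαeig
end

section
/- Let n ≥ 1 and let A, A̲, Ā be n×n real symmetric matrices with A̲ᵢⱼ ≤ Aᵢⱼ ≤ Āᵢⱼ for all entries (i, j). Then λ_min(A) ≥ λ_min(A̲) − ρ(Ā − A̲), where λ_min denotes the smallest eigenvalue and ρ denotes the spectral radius. -/
/-- The smallest eigenvalue of a real (symmetric) matrix, as the infimum of its
real spectrum. -/
noncomputable def minEigenvalue {n : ℕ} (A : Matrix (Fin n) (Fin n) ℝ) : ℝ :=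
  sInf (spectrum ℝ A)

/-- The spectral radius of a real (symmetric) matrix: the maximum absolute
value of its real spectrum. -/
noncomputable def spectralRad {n : ℕ} (A : Matrix (Fin n) (Fin n) ℝ) : ℝ :=
  sSup (abs '' spectrum ℝ A)

/-!
The quadratic form of a symmetric `B` lies above `λ_min(B) ‖v‖²`. If `|A - B| ≤ R` entrywise, the
triangle inequality bounds `|vᵀ(A - B)v|` by `|v|ᵀR|v| ≤ ρ(R) ‖v‖²`, because passing to absolute
values does not change the Euclidean norm of `v`. Evaluating `vᵀAv` at an eigenvector of `A`
compares its eigenvalue with `λ_min(B) - ρ(R)`. The interval bound is the case `B = A̲`,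
`R = Ā - A̲`.
-/

open Matrix
open scoped ComplexOrder MatrixOrder

section QuadraticForm

variable {ι : Type*} [Fintype ι]

theorem star_dotProduct_mulVec_le_of_le {𝕜 : Type*} [RCLike 𝕜] {M N : Matrix ι ι 𝕜}
    (h : M ≤ N) (v : ι → 𝕜) : star v ⬝ᵥ M *ᵥ v ≤ star v ⬝ᵥ N *ᵥ v := by
  have hsub : 0 ≤ star v ⬝ᵥ (N - M) *ᵥ v := (Matrix.le_iff.1 h).dotProduct_mulVec_nonneg v
  rwa [sub_mulVec, dotProduct_sub, sub_nonneg] at hsub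

theorem dotProduct_algebraMap_mulVec {K : Type*} [CommSemiring K] [DecidableEq ι]
    (c : K) (u v : ι → K) :
    u ⬝ᵥ algebraMap K (Matrix ι ι K) c *ᵥ v = c * (u ⬝ᵥ v) := by
  rw [Algebra.algebraMap_eq_smul_one, smul_mulVec, one_mulVec, dotProduct_smul, smul_eq_mul]

theorem le_of_mem_spectrum_of_forall_mul_dotProduct_self_le {K : Type*} [Field K] [LinearOrder K]
    [IsStrictOrderedRing K] [DecidableEq ι] {A : Matrix ι ι K} {c μ : K}
    (hμ : μ ∈ spectrum K A) (hc : ∀ v : ι → K, c * (v ⬝ᵥ v) ≤ v ⬝ᵥ A *ᵥ v) : c ≤ μ := by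
  rw [← spectrum_toLin', ← Module.End.hasEigenvalue_iff_mem_spectrum] at hμ
  obtain ⟨v, hv⟩ := hμ.exists_hasEigenvector
  have hAv : A *ᵥ v = μ • v := by simpa only [toLin'_apply] using hv.apply_eq_smul
  have hv_pos : 0 < v ⬝ᵥ v :=
    (Finset.sum_nonneg fun i _ => mul_self_nonneg (v i)).lt_of_ne'
      (dotProduct_self_eq_zero.not.2 hv.2)
  have hle : c * (v ⬝ᵥ v) ≤ μ * (v ⬝ᵥ v) := by
    simpa only [hAv, dotProduct_smul, smul_eq_mul] using hc v
  exact le_of_mul_le_mul_right hle hv_pos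

end QuadraticForm

section AbsoluteValues

variable {α m n : Type*} [CommRing α] [LinearOrder α] [Fintype m] [Fintype n]

theorem abs_dotProduct_mulVec_le [IsOrderedRing α] {B C : Matrix m n α}
    (h : ∀ i j, |B i j| ≤ C i j) (u : m → α) (v : n → α) : |u ⬝ᵥ B *ᵥ v| ≤ |u| ⬝ᵥ C *ᵥ |v| := by
  simp only [dotProduct, mulVec, Finset.mul_sum, Pi.abs_apply]
  calc |∑ i, ∑ j, u i * (B i j * v j)|
      ≤ ∑ i, ∑ j, |u i * (B i j * v j)| :=
        (Finset.abs_sum_le_sum_abs _ _).trans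
          (Finset.sum_le_sum fun _ _ => Finset.abs_sum_le_sum_abs _ _)
    _ ≤ ∑ i, ∑ j, |u i| * (C i j * |v j|) := by
        simp only [abs_mul]
        gcongr
        exact h _ _

theorem abs_dotProduct_abs_self (v : n → α) : |v| ⬝ᵥ |v| = v ⬝ᵥ v := by
  simp only [dotProduct, Pi.abs_apply, abs_mul_abs_self]

end AbsoluteValues

section ExtremeEigenvalues

variable {n : ℕ} {M : Matrix (Fin n) (Fin n) ℝ}

theorem minEigenvalue_mul_dotProduct_self_le (hM : M.IsSymm) (v : Fin n → ℝ) :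
    minEigenvalue M * (v ⬝ᵥ v) ≤ v ⬝ᵥ M *ᵥ v := by
  have hle : algebraMap ℝ _ (minEigenvalue M) ≤ M :=
    algebraMap_le_of_le_spectrum (fun _ hx => csInf_le M.finite_real_spectrum.bddBelow hx)
      (ha := (isHermitian_iff_isSymm.2 hM).isSelfAdjoint)
  simpa only [star_trivial, dotProduct_algebraMap_mulVec] using
    star_dotProduct_mulVec_le_of_le hle v

theorem dotProduct_mulVec_le_spectralRad_mul (hM : M.IsSymm) (v : Fin n → ℝ) :
    v ⬝ᵥ M *ᵥ v ≤ spectralRad M * (v ⬝ᵥ v) := by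
  have hle : M ≤ algebraMap ℝ _ (spectralRad M) :=
    le_algebraMap_of_spectrum_le (fun x hx => (le_abs_self x).trans
      (le_csSup (M.finite_real_spectrum.image _).bddAbove (Set.mem_image_of_mem _ hx)))
      (ha := (isHermitian_iff_isSymm.2 hM).isSelfAdjoint)
  simpa only [star_trivial, dotProduct_algebraMap_mulVec] using
    star_dotProduct_mulVec_le_of_le hle v

theorem abs_dotProduct_mulVec_le_spectralRad_mul {E R : Matrix (Fin n) (Fin n) ℝ}
    (hR : R.IsSymm) (hER : ∀ i j, |E i j| ≤ R i j) (v : Fin n → ℝ) :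
    |v ⬝ᵥ E *ᵥ v| ≤ spectralRad R * (v ⬝ᵥ v) :=
  calc |v ⬝ᵥ E *ᵥ v| ≤ |v| ⬝ᵥ R *ᵥ |v| := abs_dotProduct_mulVec_le hER v v
    _ ≤ spectralRad R * (|v| ⬝ᵥ |v|) := dotProduct_mulVec_le_spectralRad_mul hR |v|
    _ = spectralRad R * (v ⬝ᵥ v) := by rw [abs_dotProduct_abs_self]

end ExtremeEigenvalues

theorem mori_kokame_min_eigenvalue_bound_general {n : ℕ} {A B R : Matrix (Fin n) (Fin n) ℝ}
    (hB : B.IsSymm) (hR : R.IsSymm) (hABR : ∀ i j, |A i j - B i j| ≤ R i j)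
    {μ : ℝ} (hμ : μ ∈ spectrum ℝ A) : minEigenvalue B - spectralRad R ≤ μ := by
  refine le_of_mem_spectrum_of_forall_mul_dotProduct_self_le hμ fun v => ?_
  have hBv := minEigenvalue_mul_dotProduct_self_le hB v
  have hRv : -(spectralRad R * (v ⬝ᵥ v)) ≤ v ⬝ᵥ (A - B) *ᵥ v :=
    neg_le_of_abs_le (abs_dotProduct_mulVec_le_spectralRad_mul hR hABR v)
  rw [sub_mulVec, dotProduct_sub] at hRv
  linarith

/-- **Mori–Kokame bound for symmetric interval matrices (MK method, Eq. (19)).**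
Let `A`, `A̲`, `Ā` be `n×n` real symmetric matrices with entrywise bounds
`A̲ᵢⱼ ≤ Aᵢⱼ ≤ Āᵢⱼ`. Then `λ_min(A) ≥ λ_min(A̲) - ρ(Ā - A̲)`. -/
theorem mori_kokame_min_eigenvalue_bound (n : ℕ) (hn : 0 < n)
    (A Alo Ahi : Matrix (Fin n) (Fin n) ℝ)
    (hA : A.IsSymm) (hAlo : Alo.IsSymm) (hAhi : Ahi.IsSymm)
    (hbounds : ∀ i j, Alo i j ≤ A i j ∧ A i j ≤ Ahi i j) :
    minEigenvalue Alo - spectralRad (Ahi - Alo) ≤ minEigenvalue A := by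
  have : NeZero n := ⟨hn.ne'⟩
  have hne : (spectrum ℝ A).Nonempty :=
    ContinuousFunctionalCalculus.spectrum_nonempty A
      (isHermitian_iff_isSymm.2 hA).isSelfAdjoint
  refine le_csInf hne fun _ hμ =>
    mori_kokame_min_eigenvalue_bound_general hAlo (hAhi.sub hAlo) (fun i j => ?_) hμ
  rw [abs_of_nonneg (sub_nonneg.2 (hbounds i j).1)]
  exact sub_le_sub_right (hbounds i j).2 _
end

section
/- Let n ≥ 1 and let A, A̲, Ā be n×n real symmetric matrices with A̲ᵢⱼ ≤ Aᵢⱼ ≤ Āᵢⱼ for all entries (i, j). Define the radius matrix ΔA with entries ΔAᵢⱼ = (Āᵢⱼ − A̲ᵢⱼ)/2, the modified radius matrix Δ̃A which equals ΔA off the diagonal and has zero diagonal, the midpoint matrix A_M with entries (Āᵢⱼ + A̲ᵢⱼ)/2, and the modified midpoint matrix Ã_M which equals A_M off the diagonal and has diagonal entries A̲ᵢᵢ. Then for every n×n real symmetric matrix E, λ_min(A) ≥ λ_min(Ã_M + E) − ρ(Δ̃A + |E|), where |E| is the matrix of absolute values |Eᵢⱼ|, λ_min denotes the smallest eigenvalue,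 and ρ denotes the spectral radius. -/
/-- The modified midpoint matrix `Ã_M` of an interval matrix `[A̲, Ā]`: it
equals the midpoint matrix `(Ā + A̲)/2` off the diagonal and has diagonal
entries `A̲ᵢᵢ`. -/
noncomputable def modifiedMidpoint {n : ℕ} (Alo Ahi : Matrix (Fin n) (Fin n) ℝ) :
    Matrix (Fin n) (Fin n) ℝ :=
  Matrix.of fun i j => if i = j then Alo i i else (Ahi i j + Alo i j) / 2

/-- The modified radius matrix `Δ̃A` of an interval matrix `[A̲, Ā]`: it equals
the radius matrix `(Ā - A̲)/2` off the diagonal and has zero diagonal. -/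
noncomputable def modifiedRadius {n : ℕ} (Alo Ahi : Matrix (Fin n) (Fin n) ℝ) :
    Matrix (Fin n) (Fin n) ℝ :=
  Matrix.of fun i j => if i = j then 0 else (Ahi i j - Alo i j) / 2

/-- The entrywise absolute value of a matrix. -/
def matAbs {n : ℕ} (E : Matrix (Fin n) (Fin n) ℝ) : Matrix (Fin n) (Fin n) ℝ :=
  Matrix.of fun i j => |E i j|

section LoewnerOrder

open Matrix
open scoped ComplexOrder MatrixOrder

lemma le_iff_dotProduct_mulVec_le {𝕜 ι : Type*} [RCLike 𝕜] [Fintype ι]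
    {A B : Matrix ι ι 𝕜} (hA : A.IsHermitian) (hB : B.IsHermitian) :
    A ≤ B ↔ ∀ v : ι → 𝕜, star v ⬝ᵥ A *ᵥ v ≤ star v ⬝ᵥ B *ᵥ v := by
  simp only [Matrix.le_iff, posSemidef_iff_dotProduct_mulVec, hB.sub hA, true_and, sub_mulVec,
    dotProduct_sub, sub_nonneg]

lemma dotProduct_mulVec_le_dotProduct_mulVec_abs {R ι : Type*} [CommRing R] [LinearOrder R]
    [IsStrictOrderedRing R] [Fintype ι] {M N : Matrix ι ι R} (hdiag : ∀ i, M i i ≤ N i i)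
    (hoff : ∀ i j, i ≠ j → |M i j| ≤ N i j) (v : ι → R) :
    v ⬝ᵥ M *ᵥ v ≤ |v| ⬝ᵥ N *ᵥ |v| := by
  simp only [dotProduct, mulVec, Finset.mul_sum, Pi.abs_apply]
  refine Finset.sum_le_sum fun i _ ↦ Finset.sum_le_sum fun j _ ↦ ?_
  obtain rfl | hij := eq_or_ne i j
  · calc v i * (M i i * v i) = M i i * (v i * v i) := by ring
      _ ≤ N i i * (v i * v i) := mul_le_mul_of_nonneg_right (hdiag i) (mul_self_nonneg _)
      _ = N i i * (|v i| * |v i|) := by rw [abs_mul_abs_self]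
      _ = |v i| * (N i i * |v i|) := by ring
  · calc v i * (M i j * v j) ≤ |v i * (M i j * v j)| := le_abs_self _
      _ = |v i| * (|M i j| * |v j|) := by rw [abs_mul, abs_mul]
      _ ≤ |v i| * (N i j * |v j|) := by gcongr; exact hoff i j hij

lemma le_algebraMap_of_abs_apply_le {ι : Type*} [Fintype ι] [DecidableEq ι]
    {M N : Matrix ι ι ℝ} {c : ℝ} (hM : M.IsSymm) (hN : N.IsSymm) (hdiag : ∀ i, M i i ≤ N i i)
    (hoff : ∀ i j, i ≠ j → |M i j| ≤ N i j) (hc : N ≤ algebraMap ℝ _ c) :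
    M ≤ algebraMap ℝ _ c := by
  have hscalar : (algebraMap ℝ (Matrix ι ι ℝ) c).IsHermitian :=
    (IsSelfAdjoint.algebraMap _ (.all c)).isHermitian
  have hform (v : ι → ℝ) : v ⬝ᵥ algebraMap ℝ (Matrix ι ι ℝ) c *ᵥ v = c * (v ⬝ᵥ v) := by
    rw [Algebra.algebraMap_eq_smul_one, smul_mulVec, one_mulVec, dotProduct_smul, smul_eq_mul]
  rw [le_iff_dotProduct_mulVec_le (isHermitian_iff_isSymm.2 hN) hscalar] at hc
  refine (le_iff_dotProduct_mulVec_le (isHermitian_iff_isSymm.2 hM) hscalar).2 fun v ↦ ?_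
  calc v ⬝ᵥ M *ᵥ v ≤ |v| ⬝ᵥ N *ᵥ |v| := dotProduct_mulVec_le_dotProduct_mulVec_abs hdiag hoff v
    _ ≤ |v| ⬝ᵥ algebraMap ℝ (Matrix ι ι ℝ) c *ᵥ |v| := hc |v|
    _ = c * (|v| ⬝ᵥ |v|) := hform |v|
    _ = c * (v ⬝ᵥ v) := by simp only [dotProduct, Pi.abs_apply, abs_mul_abs_self]
    _ = v ⬝ᵥ algebraMap ℝ (Matrix ι ι ℝ) c *ᵥ v := (hform v).symm

variable {n : ℕ} {A B N : Matrix (Fin n) (Fin n) ℝ}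

lemma le_minEigenvalue_iff [NeZero n] (hA : A.IsSymm) {c : ℝ} :
    c ≤ minEigenvalue A ↔ algebraMap ℝ _ c ≤ A := by
  have hA' : A.IsHermitian := isHermitian_iff_isSymm.2 hA
  have hne : (spectrum ℝ A).Nonempty := ⟨_, hA'.eigenvalues_mem_spectrum_real 0⟩
  rw [minEigenvalue, le_csInf_iff A.finite_real_spectrum.bddBelow hne,
    algebraMap_le_iff_le_spectrum hA'.isSelfAdjoint]

lemma le_algebraMap_spectralRad (hA : A.IsSymm) : A ≤ algebraMap ℝ _ (spectralRad A) := by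
  refine (le_algebraMap_iff_spectrum_le (isHermitian_iff_isSymm.2 hA).isSelfAdjoint).2 fun μ hμ ↦ ?_
  calc μ ≤ |μ| := le_abs_self μ
    _ ≤ spectralRad A :=
      le_csSup (A.finite_real_spectrum.image _).bddAbove (Set.mem_image_of_mem _ hμ)

lemma minEigenvalue_sub_le_of_sub_le_algebraMap [NeZero n] (hA : A.IsSymm) (hB : B.IsSymm) {r : ℝ}
    (h : B - A ≤ algebraMap ℝ _ r) : minEigenvalue B - r ≤ minEigenvalue A := by
  refine (le_minEigenvalue_iff hA).2 ?_
  calc algebraMap ℝ _ (minEigenvalue B - r)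
      = algebraMap ℝ _ (minEigenvalue B) - algebraMap ℝ _ r := map_sub _ _ _
    _ ≤ B - (B - A) := sub_le_sub ((le_minEigenvalue_iff hB).1 le_rfl) h
    _ = A := sub_sub_cancel B A

lemma minEigenvalue_sub_spectralRad_le [NeZero n] (hA : A.IsSymm) (hB : B.IsSymm) (hN : N.IsSymm)
    (hdiag : ∀ i, B i i - A i i ≤ N i i) (hoff : ∀ i j, i ≠ j → |B i j - A i j| ≤ N i j) :
    minEigenvalue B - spectralRad N ≤ minEigenvalue A :=
  minEigenvalue_sub_le_of_sub_le_algebraMap hA hB <|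
    le_algebraMap_of_abs_apply_le (hB.sub hA) hN hdiag hoff (le_algebraMap_spectralRad hN)

end LoewnerOrder

section IntervalMatrix

variable {n : ℕ} {Alo Ahi : Matrix (Fin n) (Fin n) ℝ}

lemma modifiedMidpoint_apply_self (i : Fin n) : modifiedMidpoint Alo Ahi i i = Alo i i :=
  if_pos rfl

lemma modifiedRadius_apply_self (i : Fin n) : modifiedRadius Alo Ahi i i = 0 :=
  if_pos rfl

lemma modifiedMidpoint_apply_of_ne {i j : Fin n} (hij : i ≠ j) :
    modifiedMidpoint Alo Ahi i j = (Ahi i j + Alo i j) / 2 :=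
  if_neg hij

lemma modifiedRadius_apply_of_ne {i j : Fin n} (hij : i ≠ j) :
    modifiedRadius Alo Ahi i j = (Ahi i j - Alo i j) / 2 :=
  if_neg hij

lemma isSymm_modifiedMidpoint (hAlo : Alo.IsSymm) (hAhi : Ahi.IsSymm) :
    (modifiedMidpoint Alo Ahi).IsSymm := by
  refine .ext fun i j ↦ ?_
  obtain rfl | hij := eq_or_ne i j
  · rfl
  · rw [modifiedMidpoint_apply_of_ne hij, modifiedMidpoint_apply_of_ne hij.symm, hAlo.apply,
      hAhi.apply]

lemma isSymm_modifiedRadius (hAlo : Alo.IsSymm) (hAhi : Ahi.IsSymm) :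
    (modifiedRadius Alo Ahi).IsSymm := by
  refine .ext fun i j ↦ ?_
  obtain rfl | hij := eq_or_ne i j
  · rfl
  · rw [modifiedRadius_apply_of_ne hij, modifiedRadius_apply_of_ne hij.symm, hAlo.apply,
      hAhi.apply]

lemma isSymm_matAbs {E : Matrix (Fin n) (Fin n) ℝ} (hE : E.IsSymm) : (matAbs E).IsSymm :=
  hE.map abs

lemma abs_modifiedMidpoint_sub_le {A : Matrix (Fin n) (Fin n) ℝ} {i j : Fin n} (hij : i ≠ j)
    (hA : A i j ∈ Set.Icc (Alo i j) (Ahi i j)) :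
    |modifiedMidpoint Alo Ahi i j - A i j| ≤ modifiedRadius Alo Ahi i j := by
  rw [modifiedMidpoint_apply_of_ne hij, modifiedRadius_apply_of_ne hij, abs_le]
  constructor <;> linarith [hA.1, hA.2]

end IntervalMatrix

/-- **E-matrix bound for symmetric interval matrices (EM method, Eq. (18)).**
Let `A`, `A̲`, `Ā` be `n×n` real symmetric matrices with entrywise bounds
`A̲ᵢⱼ ≤ Aᵢⱼ ≤ Āᵢⱼ`. Then for every `n×n` real symmetric matrix `E`,
`λ_min(A) ≥ λ_min(Ã_M + E) - ρ(Δ̃A + |E|)`. -/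
theorem e_matrix_min_eigenvalue_bound (n : ℕ) (hn : 0 < n)
    (A Alo Ahi : Matrix (Fin n) (Fin n) ℝ)
    (hA : A.IsSymm) (hAlo : Alo.IsSymm) (hAhi : Ahi.IsSymm)
    (hbounds : ∀ i j, Alo i j ≤ A i j ∧ A i j ≤ Ahi i j)
    (E : Matrix (Fin n) (Fin n) ℝ) (hE : E.IsSymm) :
    minEigenvalue (modifiedMidpoint Alo Ahi + E)
      - spectralRad (modifiedRadius Alo Ahi + matAbs E)
      ≤ minEigenvalue A := by
  have : NeZero n := ⟨hn.ne'⟩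
  refine minEigenvalue_sub_spectralRad_le hA ((isSymm_modifiedMidpoint hAlo hAhi).add hE)
    ((isSymm_modifiedRadius hAlo hAhi).add (isSymm_matAbs hE)) (fun i ↦ ?_) fun i j hij ↦ ?_
  · calc modifiedMidpoint Alo Ahi i i + E i i - A i i
        = Alo i i + E i i - A i i := by rw [modifiedMidpoint_apply_self]
      _ ≤ 0 + |E i i| := by linarith [(hbounds i i).1, le_abs_self (E i i)]
      _ = modifiedRadius Alo Ahi i i + |E i i| := by rw [modifiedRadius_apply_self]
  · calc |modifiedMidpoint Alo Ahi i j + E i j - A i j|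
        = |modifiedMidpoint Alo Ahi i j - A i j + E i j| := by rw [add_sub_right_comm]
      _ ≤ |modifiedMidpoint Alo Ahi i j - A i j| + |E i j| := abs_add_le _ _
      _ ≤ modifiedRadius Alo Ahi i j + |E i j| :=
        add_le_add_left (abs_modifiedMidpoint_sub_le hij (hbounds i j)) _
end
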